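/- arXiv:math/0702651 — 2 statements merged into one kernel-verified Lean document; each statement's English description precedes it below -/
import Mathlib

section
/- Let α be a node in a Kripke model whose strict successors are exactly the nodes lying above α_1 or above α_2, where α_1 and α_2 are the two immediate successors of α, and let φ be a propositional formula. Suppose that for each subformula φ' of φ, α_1 ⊩ φ' iff α_2 ⊩ φ', and that for every propositional variable v occurring in φ, if both α_1 and α_2 force v then α forces v. Then for each subformula φ' of φ, α ⊩ φ' iff α_1 ⊩ φ'. In particular, α ⊩ φ iff α_1 ⊩ φ iff α_2 ⊩ φ. -/
/-!
The proof is by induction on `φ`. Persistence of forcing gives the passage from `α` to `α₁`.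
Conversely, variables are handled by the hypothesis on the valuation, and `∧`, `∨` by the
induction hypothesis. Suppose `α₁` forces `A → B`; then so does `α₂`, so the implication
holds at every node strictly above `α`. At `α` itself, if `A` is forced then it is forced at
`α₁`, hence so is `B`, and the induction hypothesis for `B` brings it back to `α`.
-/



/-- Propositional formulas over a set `V` of variables, built from `∧, ∨, →, ⊥, ⊤`.
`¬φ` is the abbreviation `φ → ⊥`. -/
inductive PropForm (V : Type) : Type
  | var : V → PropForm V
  | bot : PropForm V
  | top : PropForm V
  | and : PropForm V → PropForm V → PropForm V
  | or : PropForm V → PropForm V → PropForm V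
  | imp : PropForm V → PropForm V → PropForm V

/-- A natural-deduction style consequence relation.  When the parameter `cl` is `False`
this is exactly the consequence relation `⊢` of intuitionistic propositional logic;
when `cl` is `True` the rule of excluded middle becomes available and it is the
consequence relation `⊢_C` of classical propositional logic. -/
inductive Prov {V : Type} (cl : Prop) : Set (PropForm V) → PropForm V → Prop
  | ax : ∀ {Γ : Set (PropForm V)} {φ}, φ ∈ Γ → Prov cl Γ φ
  | topI : ∀ {Γ}, Prov cl Γ .top
  | botE : ∀ {Γ φ}, Prov cl Γ .bot → Prov cl Γ φ
  | andI : ∀ {Γ φ ψ}, Prov cl Γ φ → Prov cl Γ ψ → Prov cl Γ (.and φ ψ)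
  | andE1 : ∀ {Γ φ ψ}, Prov cl Γ (.and φ ψ) → Prov cl Γ φ
  | andE2 : ∀ {Γ φ ψ}, Prov cl Γ (.and φ ψ) → Prov cl Γ ψ
  | orI1 : ∀ {Γ φ ψ}, Prov cl Γ φ → Prov cl Γ (.or φ ψ)
  | orI2 : ∀ {Γ φ ψ}, Prov cl Γ ψ → Prov cl Γ (.or φ ψ)
  | orE : ∀ {Γ φ ψ χ}, Prov cl Γ (.or φ ψ) → Prov cl (insert φ Γ) χ →
      Prov cl (insert ψ Γ) χ → Prov cl Γ χ
  | impI : ∀ {Γ φ ψ}, Prov cl (insert φ Γ) ψ → Prov cl Γ (.imp φ ψ)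
  | impE : ∀ {Γ φ ψ}, Prov cl Γ (.imp φ ψ) → Prov cl Γ φ → Prov cl Γ ψ
  | em : ∀ {Γ φ}, cl → Prov cl Γ (.or φ (.imp φ .bot))

/-- Intuitionistic consequence `Γ ⊢ φ`. -/
abbrev IProv {V : Type} (Γ : Set (PropForm V)) (φ : PropForm V) : Prop := Prov False Γ φ

/-- Classical consequence `Γ ⊢_C φ`. -/
abbrev CProv {V : Type} (Γ : Set (PropForm V)) (φ : PropForm V) : Prop := Prov True Γ φ

/-- A Kripke model for intuitionistic propositional logic over variables `V`:
a partially ordered set of nodes with a monotone valuation. -/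
structure KripkeModel (V : Type) where
  W : Type
  le : W → W → Prop
  le_refl : ∀ a, le a a
  le_trans : ∀ a b c, le a b → le b c → le a c
  le_antisymm : ∀ a b, le a b → le b a → a = b
  val : W → V → Prop
  val_mono : ∀ a b v, le a b → val a v → val b v

/-- The forcing relation `α ⊩ φ` of a Kripke model. -/
def KripkeModel.Forces {V : Type} (M : KripkeModel V) : M.W → PropForm V → Prop
  | w, .var v => M.val w v
  | _, .bot => False
  | _, .top => True
  | w, .and φ ψ => M.Forces w φ ∧ M.Forces w ψ
  | w, .or φ ψ => M.Forces w φ ∨ M.Forces w ψ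
  | w, .imp φ ψ => ∀ u, M.le w u → M.Forces u φ → M.Forces u ψ

/-- The set of subformulas of a formula (including the formula itself). -/
def PropForm.subformulas {V : Type} : PropForm V → Set (PropForm V)
  | .var v => {.var v}
  | .bot => {.bot}
  | .top => {.top}
  | .and φ ψ => insert (.and φ ψ) (φ.subformulas ∪ ψ.subformulas)
  | .or φ ψ => insert (.or φ ψ) (φ.subformulas ∪ ψ.subformulas)
  | .imp φ ψ => insert (.imp φ ψ) (φ.subformulas ∪ ψ.subformulas)

/-- The set of propositional variables occurring in a formula. -/
def PropForm.vars {V : Type} : PropForm V → Set V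
  | .var v => {v}
  | .bot => ∅
  | .top => ∅
  | .and φ ψ => φ.vars ∪ ψ.vars
  | .or φ ψ => φ.vars ∪ ψ.vars
  | .imp φ ψ => φ.vars ∪ ψ.vars


theorem KripkeModel.forces_mono {V : Type} (M : KripkeModel V) (φ : PropForm V) :
    ∀ a b, M.le a b → M.Forces a φ → M.Forces b φ := by
  induction φ with
  | var v => exact fun a b h => M.val_mono a b v h
  | bot => exact fun _ _ _ h => h
  | top => exact fun _ _ _ h => h
  | and A B ihA ihB => exact fun a b h hf => ⟨ihA a b h hf.1, ihB a b h hf.2⟩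
  | or A B ihA ihB => exact fun a b h hf => hf.imp (ihA a b h) (ihB a b h)
  | imp A B => exact fun a b h hf u hu => hf u (M.le_trans a b u h hu)

theorem PropForm.self_mem_subformulas {V : Type} (φ : PropForm V) : φ ∈ φ.subformulas := by
  cases φ <;> simp [PropForm.subformulas]

/-- Let `α` be a node of a Kripke model whose strict successors are exactly the nodes
lying above `α₁` or above `α₂`, its two (distinct) immediate successors.  If every
subformula of `φ` is forced at `α₁` iff it is forced at `α₂`, and every variable of `φ`
forced at both `α₁` and `α₂` is forced at `α`, then every subformula of `φ` is forced at
`α` iff it is forced at `α₁`; in particular `α ⊩ φ` iff `α₁ ⊩ φ` iff `α₂ ⊩ φ`. -/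
theorem forcing_transfer_two_successors (V : Type) (M : KripkeModel V) (α α₁ α₂ : M.W)
    (h1 : M.le α α₁ ∧ α ≠ α₁) (h2 : M.le α α₂ ∧ α ≠ α₂) (hne : α₁ ≠ α₂)
    (hsucc : ∀ β, (M.le α β ∧ α ≠ β) ↔ (M.le α₁ β ∨ M.le α₂ β))
    (φ : PropForm V)
    (hsub : ∀ φ' ∈ φ.subformulas, (M.Forces α₁ φ' ↔ M.Forces α₂ φ'))
    (hvar : ∀ v ∈ φ.vars, M.val α₁ v → M.val α₂ v → M.val α v) :
    (∀ φ' ∈ φ.subformulas, (M.Forces α φ' ↔ M.Forces α₁ φ')) ∧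
    (M.Forces α φ ↔ M.Forces α₁ φ) ∧ (M.Forces α₁ φ ↔ M.Forces α₂ φ) := by
  suffices h : ∀ φ' ∈ φ.subformulas, (M.Forces α φ' ↔ M.Forces α₁ φ') from
    ⟨h, h φ φ.self_mem_subformulas, hsub φ φ.self_mem_subformulas⟩
  induction φ with
  | var v =>
    rintro _ rfl
    have hv := hsub (.var v) rfl
    exact ⟨M.forces_mono _ _ _ h1.1, fun h => hvar v rfl h (hv.1 h)⟩
  | bot =>
    rintro _ rfl
    exact Iff.rfl
  | top =>
    rintro _ rfl
    exact Iff.rfl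
  | and A B ihA ihB =>
    have hA := ihA (fun x hx => hsub x (.inr (.inl hx))) (fun v hv => hvar v (.inl hv))
    have hB := ihB (fun x hx => hsub x (.inr (.inr hx))) (fun v hv => hvar v (.inr hv))
    rintro φ' (rfl | hφ' | hφ')
    · exact and_congr (hA A A.self_mem_subformulas) (hB B B.self_mem_subformulas)
    · exact hA φ' hφ'
    · exact hB φ' hφ'
  | or A B ihA ihB =>
    have hA := ihA (fun x hx => hsub x (.inr (.inl hx))) (fun v hv => hvar v (.inl hv))
    have hB := ihB (fun x hx => hsub x (.inr (.inr hx))) (fun v hv => hvar v (.inr hv))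
    rintro φ' (rfl | hφ' | hφ')
    · exact or_congr (hA A A.self_mem_subformulas) (hB B B.self_mem_subformulas)
    · exact hA φ' hφ'
    · exact hB φ' hφ'
  | imp A B ihA ihB =>
    have hA := ihA (fun x hx => hsub x (.inr (.inl hx))) (fun v hv => hvar v (.inl hv))
    have hB := ihB (fun x hx => hsub x (.inr (.inr hx))) (fun v hv => hvar v (.inr hv))
    rintro φ' (rfl | hφ' | hφ')
    · refine ⟨M.forces_mono _ _ _ h1.1, fun h u hu huA => ?_⟩
      have h' := (hsub (.imp A B) (PropForm.self_mem_subformulas _)).1 h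
      by_cases hαu : α = u
      · subst hαu
        exact (hB B B.self_mem_subformulas).2
          (h α₁ (M.le_refl α₁) ((hA A A.self_mem_subformulas).1 huA))
      · exact ((hsucc u).1 ⟨hu, hαu⟩).elim (fun hle => h u hle huA) (fun hle => h' u hle huA)
    · exact hA φ' hφ'
    · exact hB φ' hφ'
end

section
/- For every m ≥ 1 there is no ∨-preserving, tautology-respecting translation from m-variable classical propositional logic into intuitionistic propositional logic: there is no function f : F_m → F_ω such that f(φ∨ψ) = f(φ) ∨ f(ψ) for all φ, ψ ∈ F_m and such that for all φ ∈ F_m, ⊢_C φ iff ⊢ f(φ). -/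
theorem Prov.mono {V : Type} {cl : Prop} {Γ : Set (PropForm V)} {φ : PropForm V}
    (h : Prov cl Γ φ) : ∀ {Δ : Set (PropForm V)}, Γ ⊆ Δ → Prov cl Δ φ := by
  induction h with
  | ax hmem => intro Δ hsub; exact Prov.ax (hsub hmem)
  | topI => intro Δ _; exact Prov.topI
  | botE _ ih => intro Δ hsub; exact Prov.botE (ih hsub)
  | andI _ _ ih1 ih2 => intro Δ hsub; exact Prov.andI (ih1 hsub) (ih2 hsub)
  | andE1 _ ih => intro Δ hsub; exact Prov.andE1 (ih hsub)
  | andE2 _ ih => intro Δ hsub; exact Prov.andE2 (ih hsub)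
  | orI1 _ ih => intro Δ hsub; exact Prov.orI1 (ih hsub)
  | orI2 _ ih => intro Δ hsub; exact Prov.orI2 (ih hsub)
  | orE _ _ _ ih1 ih2 ih3 =>
      intro Δ hsub
      exact Prov.orE (ih1 hsub) (ih2 (Set.insert_subset_insert hsub))
        (ih3 (Set.insert_subset_insert hsub))
  | impI _ ih => intro Δ hsub; exact Prov.impI (ih (Set.insert_subset_insert hsub))
  | impE _ _ ih1 ih2 => intro Δ hsub; exact Prov.impE (ih1 hsub) (ih2 hsub)
  | em hcl => intro Δ _; exact Prov.em hcl

theorem Prov.cut {V : Type} {cl : Prop} {Γ : Set (PropForm V)} {φ ψ : PropForm V}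
    (h1 : Prov cl Γ φ) (h2 : Prov cl (insert φ Γ) ψ) : Prov cl Γ ψ :=
  Prov.impE (Prov.impI h2) h1

/-- Single-premise consequence: `φ ⊢ ψ` (intuitionistic when `cl = False`). -/
def Entails {V : Type} (cl : Prop) (φ ψ : PropForm V) : Prop := Prov cl {φ} ψ

theorem Entails.refl {V : Type} {cl : Prop} (φ : PropForm V) : Entails cl φ φ := Prov.ax rfl

theorem Entails.trans' {V : Type} {cl : Prop} {φ ψ χ : PropForm V}
    (h1 : Entails cl φ ψ) (h2 : Entails cl ψ χ) : Entails cl φ χ :=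
  Prov.cut h1 (h2.mono (Set.singleton_subset_iff.mpr (Set.mem_insert _ _)))

theorem Entails.and_congr {V : Type} {cl : Prop} {a b c d : PropForm V}
    (h1 : Entails cl a b) (h2 : Entails cl c d) :
    Entails cl (PropForm.and a c) (PropForm.and b d) := by
  have ha : Prov cl ({PropForm.and a c} : Set (PropForm V)) a := Prov.andE1 (Prov.ax rfl)
  have hc : Prov cl ({PropForm.and a c} : Set (PropForm V)) c := Prov.andE2 (Prov.ax rfl)
  exact Prov.andI
    (Prov.cut ha (h1.mono (Set.singleton_subset_iff.mpr (Set.mem_insert _ _))))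
    (Prov.cut hc (h2.mono (Set.singleton_subset_iff.mpr (Set.mem_insert _ _))))

theorem Entails.or_congr {V : Type} {cl : Prop} {a b c d : PropForm V}
    (h1 : Entails cl a b) (h2 : Entails cl c d) :
    Entails cl (PropForm.or a c) (PropForm.or b d) :=
  Prov.orE (Prov.ax rfl)
    (Prov.orI1 (h1.mono (Set.singleton_subset_iff.mpr (Set.mem_insert _ _))))
    (Prov.orI2 (h2.mono (Set.singleton_subset_iff.mpr (Set.mem_insert _ _))))

/-- Logical equivalence (intuitionistic when `cl = False`, classical when `cl = True`). -/
def provSetoid (cl : Prop) (V : Type) : Setoid (PropForm V) where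
  r φ ψ := Entails cl φ ψ ∧ Entails cl ψ φ
  iseqv := ⟨fun φ => ⟨Entails.refl φ, Entails.refl φ⟩, fun h => ⟨h.2, h.1⟩,
    fun h1 h2 => ⟨h1.1.trans' h2.1, h2.2.trans' h1.2⟩⟩

/-- The Lindenbaum algebra of formulas over `V` modulo logical equivalence.
`Lindenbaum False (Fin n)` is the free Heyting algebra `H_n`,
`Lindenbaum False ℕ` is `H_ω`, and `Lindenbaum True ℕ` is the free Boolean
algebra `B_ω`. -/
def Lindenbaum (cl : Prop) (V : Type) : Type := Quotient (provSetoid cl V)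

/-- The equivalence class of a formula. -/
def Lindenbaum.mk (cl : Prop) {V : Type} (φ : PropForm V) : Lindenbaum cl V :=
  Quotient.mk (provSetoid cl V) φ

/-- The order of the Lindenbaum algebra: `[φ] ≤ [ψ]` iff `φ ⊢ ψ`. -/
def Lindenbaum.le {cl : Prop} {V : Type} : Lindenbaum cl V → Lindenbaum cl V → Prop :=
  Quotient.lift₂ (Entails cl) (by
    intro a b a' b' ha hb
    obtain ⟨ha1, ha2⟩ := ha
    obtain ⟨hb1, hb2⟩ := hb
    exact propext ⟨fun h => (ha2.trans' h).trans' hb1, fun h => (ha1.trans' h).trans' hb2⟩)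

/-- The meet `∧` of the Lindenbaum algebra. -/
def Lindenbaum.inf {cl : Prop} {V : Type} :
    Lindenbaum cl V → Lindenbaum cl V → Lindenbaum cl V :=
  Quotient.map₂ PropForm.and (by
    intro a a' ha b b' hb
    obtain ⟨ha1, ha2⟩ := ha
    obtain ⟨hb1, hb2⟩ := hb
    exact ⟨ha1.and_congr hb1, ha2.and_congr hb2⟩)

/-- The join `∨` of the Lindenbaum algebra. -/
def Lindenbaum.sup {cl : Prop} {V : Type} :
    Lindenbaum cl V → Lindenbaum cl V → Lindenbaum cl V :=
  Quotient.map₂ PropForm.or (by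
    intro a a' ha b b' hb
    obtain ⟨ha1, ha2⟩ := ha
    obtain ⟨hb1, hb2⟩ := hb
    exact ⟨ha1.or_congr hb1, ha2.or_congr hb2⟩)

/-- Truth-table semantics under the valuation `v`, with values in `Prop`. -/
def PropForm.Holds {V : Type} (v : V → Prop) : PropForm V → Prop
  | .var x => v x
  | .bot => False
  | .top => True
  | .and φ ψ => φ.Holds v ∧ ψ.Holds v
  | .or φ ψ => φ.Holds v ∨ ψ.Holds v
  | .imp φ ψ => φ.Holds v → ψ.Holds v

theorem Prov.sound {V : Type} {cl : Prop} (v : V → Prop) {Γ : Set (PropForm V)} {φ : PropForm V}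
    (h : Prov cl Γ φ) : (∀ γ ∈ Γ, γ.Holds v) → φ.Holds v := by
  induction h with
  | ax hmem => exact fun hΓ => hΓ _ hmem
  | topI => exact fun _ => trivial
  | botE _ ih => exact fun hΓ => (ih hΓ).elim
  | andI _ _ ih1 ih2 => exact fun hΓ => ⟨ih1 hΓ, ih2 hΓ⟩
  | andE1 _ ih => exact fun hΓ => (ih hΓ).1
  | andE2 _ ih => exact fun hΓ => (ih hΓ).2
  | orI1 _ ih => exact fun hΓ => Or.inl (ih hΓ)
  | orI2 _ ih => exact fun hΓ => Or.inr (ih hΓ)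
  | orE _ _ _ ih ih1 ih2 =>
      exact fun hΓ => (ih hΓ).elim (fun h => ih1 (Set.forall_mem_insert.mpr ⟨h, hΓ⟩))
        (fun h => ih2 (Set.forall_mem_insert.mpr ⟨h, hΓ⟩))
  | impI _ ih => exact fun hΓ h => ih (Set.forall_mem_insert.mpr ⟨h, hΓ⟩)
  | impE _ _ ih1 ih2 => exact fun hΓ => ih1 hΓ (ih2 hΓ)
  | em _ => exact fun _ => Classical.em _

/-- Simultaneous cut: a possibly infinite set of premises may be replaced by any premises that
prove all of them. -/
theorem Prov.multicut {V : Type} {cl : Prop} {Γ : Set (PropForm V)} {φ : PropForm V}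
    (h : Prov cl Γ φ) : ∀ {Δ : Set (PropForm V)}, (∀ γ ∈ Γ, Prov cl Δ γ) → Prov cl Δ φ := by
  have lift : ∀ {Γ Δ : Set (PropForm V)} (ψ : PropForm V), (∀ γ ∈ Γ, Prov cl Δ γ) →
      ∀ γ ∈ insert ψ Γ, Prov cl (insert ψ Δ) γ := fun ψ hΓ =>
    Set.forall_mem_insert.mpr ⟨Prov.ax (Set.mem_insert _ _),
      fun γ hγ => (hΓ γ hγ).mono (Set.subset_insert _ _)⟩
  induction h with
  | ax hmem => exact fun hΓ => hΓ _ hmem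
  | topI => exact fun _ => Prov.topI
  | botE _ ih => exact fun hΓ => Prov.botE (ih hΓ)
  | andI _ _ ih1 ih2 => exact fun hΓ => Prov.andI (ih1 hΓ) (ih2 hΓ)
  | andE1 _ ih => exact fun hΓ => Prov.andE1 (ih hΓ)
  | andE2 _ ih => exact fun hΓ => Prov.andE2 (ih hΓ)
  | orI1 _ ih => exact fun hΓ => Prov.orI1 (ih hΓ)
  | orI2 _ ih => exact fun hΓ => Prov.orI2 (ih hΓ)
  | orE _ _ _ ih ih1 ih2 =>
      exact fun hΓ => Prov.orE (ih hΓ) (ih1 (lift _ hΓ)) (ih2 (lift _ hΓ))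
  | impI _ ih => exact fun hΓ => Prov.impI (ih (lift _ hΓ))
  | impE _ _ ih1 ih2 => exact fun hΓ => Prov.impE (ih1 hΓ) (ih2 hΓ)
  | em hcl => exact fun _ => Prov.em hcl

/-- Aczel's slash over the empty theory: truth, with provability additionally required of
variables and implications. -/
def Slash {V : Type} : PropForm V → Prop
  | .var x => IProv ∅ (.var x)
  | .bot => False
  | .top => True
  | .and φ ψ => Slash φ ∧ Slash ψ
  | .or φ ψ => Slash φ ∨ Slash ψ
  | .imp φ ψ => IProv ∅ (.imp φ ψ) ∧ (Slash φ → Slash ψ)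

theorem Slash.prov {V : Type} {φ : PropForm V} (h : Slash φ) : IProv ∅ φ := by
  induction φ with
  | var x => exact h
  | bot => exact h.elim
  | top => exact Prov.topI
  | and φ ψ ih1 ih2 => exact Prov.andI (ih1 h.1) (ih2 h.2)
  | or φ ψ ih1 ih2 => exact h.elim (fun h => Prov.orI1 (ih1 h)) (fun h => Prov.orI2 (ih2 h))
  | imp φ ψ _ _ => exact h.1

/-- Intuitionistic derivations preserve the slash; excluded middle would not. -/
theorem Prov.slash {V : Type} {Γ : Set (PropForm V)} {φ : PropForm V}
    (h : IProv Γ φ) : (∀ γ ∈ Γ, Slash γ) → Slash φ := by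
  induction h with
  | ax hmem => exact fun hΓ => hΓ _ hmem
  | topI => exact fun _ => trivial
  | botE _ ih => exact fun hΓ => (ih hΓ).elim
  | andI _ _ ih1 ih2 => exact fun hΓ => ⟨ih1 hΓ, ih2 hΓ⟩
  | andE1 _ ih => exact fun hΓ => (ih hΓ).1
  | andE2 _ ih => exact fun hΓ => (ih hΓ).2
  | orI1 _ ih => exact fun hΓ => Or.inl (ih hΓ)
  | orI2 _ ih => exact fun hΓ => Or.inr (ih hΓ)
  | orE _ _ _ ih ih1 ih2 =>
      exact fun hΓ => (ih hΓ).elim (fun h => ih1 (Set.forall_mem_insert.mpr ⟨h, hΓ⟩))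
        (fun h => ih2 (Set.forall_mem_insert.mpr ⟨h, hΓ⟩))
  | impI h ih =>
      -- The premises are slashed, hence theorems, so they can be cut away from the implication.
      exact fun hΓ => ⟨(Prov.impI h).multicut fun γ hγ => (hΓ γ hγ).prov,
        fun h => ih (Set.forall_mem_insert.mpr ⟨h, hΓ⟩)⟩
  | impE _ _ ih1 ih2 => exact fun hΓ => (ih1 hΓ).2 (ih2 hΓ)
  | em hcl => exact hcl.elim

theorem Prov.disjunction {V : Type} {φ ψ : PropForm V} (h : IProv ∅ (.or φ ψ)) :
    IProv ∅ φ ∨ IProv ∅ ψ :=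
  Or.imp Slash.prov Slash.prov (Prov.slash h (by simp) : Slash φ ∨ Slash ψ)

/-- For `m ≥ 1` there is no `∨`-preserving, tautology-respecting translation from
`m`-variable classical propositional logic into intuitionistic propositional logic. -/
theorem no_or_preserving_tautology_translation (m : ℕ) (hm : 1 ≤ m) :
    ¬∃ f : PropForm (Fin m) → PropForm ℕ,
      (∀ φ ψ : PropForm (Fin m), f (PropForm.or φ ψ) = PropForm.or (f φ) (f ψ)) ∧
      (∀ φ : PropForm (Fin m), (CProv (∅ : Set (PropForm (Fin m))) φ ↔
        IProv (∅ : Set (PropForm ℕ)) (f φ))) := by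
  rintro ⟨f, hor, hf⟩
  let x : PropForm (Fin m) := .var ⟨0, hm⟩
  have hx : IProv ∅ (.or (f x) (f (.imp x .bot))) := hor _ _ ▸ (hf _).1 (Prov.em trivial)
  rcases hx.disjunction with h | h
  · exact ((hf _).2 h).sound (fun _ => False) (by simp)
  · exact ((hf _).2 h).sound (fun _ => True) (by simp) trivial
end
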